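/- Let A be a finite collection of nonempty finite subsets of a linearly ordered finite set V, and let T(A) be its Tchebyshev triangulation. Then the Tchebyshev transform of the F-polynomial of A equals the F-polynomial of T(A): T(F_A)(x) = F_{T(A)}(x) in ℚ[x], where F_A(x) = 1 + Σ_{j≥1} s_j(A)·((x−1)/2)^j and F_{T(A)}(x) = 1 + Σ_{k≥1} f_{k−1}(T(A))·((x−1)/2)^k. -/

import Mathlib

open Finset

/-- The set of vertices of the original complex underlying a vertex `(u, v)` of the
Tchebyshev triangulation: `{u, v} ∖ {1̂}`, where `1̂ = ⊤`. -/
def pairVertexSet {α : Type*} [DecidableEq α] (p : α × WithTop α) : Finset α :=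
  WithTop.recTopCoe {p.1} (fun a => {p.1, a}) p.2

/-- The `(k-1)`-dimensional faces of the Tchebyshev triangulation `T(A)` of a collection `A`
of nonempty finite subsets of a linearly ordered set `V`: sets
`{(u_1,v_1),…,(u_k,v_k)}` with `u_i ∈ V`, `v_i ∈ V ∪ {1̂}`, `u_i < v_i`, `v_1 < ⋯ < v_k`,
such that `{u_1,v_1,…,u_k,v_k} ∖ {1̂} ∈ A`, and for each `i ≤ k-1` either `u_i = u_{i+1}`
or `v_i ≤ u_{i+1}`. -/
def tchebFaces {α : Type*} [LinearOrder α] [DecidableEq α]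
    (A : Finset (Finset α)) (k : ℕ) : Set (Finset (α × WithTop α)) :=
  {σ | ∃ e : Fin k → α × WithTop α,
      σ = Finset.image e Finset.univ ∧
      StrictMono (fun i => (e i).2) ∧
      (∀ i, ((e i).1 : WithTop α) < (e i).2) ∧
      (Finset.univ.biUnion fun i => pairVertexSet (e i)) ∈ A ∧
      (∀ i j : Fin k, (i : ℕ) + 1 = (j : ℕ) →
        (e i).1 = (e j).1 ∨ (e i).2 ≤ ((e j).1 : WithTop α))}

/-- `s_j(A)`: the number of members of `A` of cardinality `j`. -/
def sCount {α : Type*} [DecidableEq α] (A : Finset (Finset α)) (j : ℕ) : ℕ :=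
  (A.filter fun F => F.card = j).card

open Polynomial

/-- The Tchebyshev transform: the `ℚ`-linear map `ℚ[x] → ℚ[x]` sending `x^n` to the `n`-th
Chebyshev polynomial of the first kind `T_n(x)`, evaluated on a polynomial `p`. -/
noncomputable def chebTransform (p : Polynomial ℚ) : Polynomial ℚ :=
  ∑ n ∈ Finset.range (p.natDegree + 1),
    Polynomial.C (p.coeff n) * Polynomial.Chebyshev.T ℚ (n : ℤ)

/-! With `t = (x - 1) / 2`, the recurrence `T_{n+2} = 2 x T_{n+1} - T_n` becomes
`T(t² q) = t (2 T(t q) + T(q))`. The faces of the Tchebyshev triangulation are the finite chains of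
the strict order `(u, v) ≺ (u', v') ↔ v < v' ∧ (u = u' ∨ v ≤ u')`. If a face involves exactly
the vertices `a < b < ⋯`, its least pair is `(a, b)`, and the remaining pairs form a face that
misses `a`, or `b`, or both. Hence the generating polynomials of the faces on a given vertex set
satisfy the recurrence of `T(t ^ n)`. -/

section Chebyshev

/-- `chebTransform` bundled as a linear map. -/
noncomputable def chebTransformₗ : ℚ[X] →ₗ[ℚ] ℚ[X] :=
  lsum fun n => LinearMap.toSpanSingleton ℚ ℚ[X] (Chebyshev.T ℚ n)

theorem chebTransformₗ_apply (p : ℚ[X]) : chebTransformₗ p = chebTransform p := by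
  simp only [chebTransformₗ, lsum_apply, LinearMap.toSpanSingleton_apply, smul_eq_C_mul,
    chebTransform]
  exact sum_over_range _ (by simp)

theorem chebTransformₗ_C_mul (a : ℚ) (p : ℚ[X]) :
    chebTransformₗ (C a * p) = C a * chebTransformₗ p := by
  simp only [← smul_eq_C_mul, map_smul]

theorem chebTransformₗ_X_pow (n : ℕ) : chebTransformₗ (X ^ n) = Chebyshev.T ℚ n := by
  simp [chebTransformₗ, ← monomial_one_right_eq_X_pow, lsum_apply]

theorem chebTransformₗ_one : chebTransformₗ 1 = 1 := by
  simpa using chebTransformₗ_X_pow 0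

theorem chebTransformₗ_X_sq_mul (q : ℚ[X]) :
    chebTransformₗ (X ^ 2 * q) = 2 * X * chebTransformₗ (X * q) - chebTransformₗ q := by
  induction q using Polynomial.induction_on' with
  | add p q hp hq => simp only [mul_add, map_add, hp, hq]; ring
  | monomial n a =>
    simp only [← C_mul_X_pow_eq_monomial, mul_left_comm _ (C a), ← pow_add, ← pow_succ',
      chebTransformₗ_C_mul, chebTransformₗ_X_pow, add_comm 2 n]
    push_cast
    rw [Chebyshev.T_add_two]
    ring

theorem chebTransformₗ_half_X_sub_one :
    chebTransformₗ ((X - 1) * C (1 / 2)) = (X - 1) * C (1 / 2) := by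
  have hX : chebTransformₗ X = X := by simpa using chebTransformₗ_X_pow 1
  rw [mul_comm, chebTransformₗ_C_mul, map_sub, hX, chebTransformₗ_one]

theorem chebTransformₗ_half_X_sub_one_sq_mul (q : ℚ[X]) :
    chebTransformₗ (((X - 1) * C (1 / 2)) ^ 2 * q) =
      (X - 1) * C (1 / 2) * (2 * chebTransformₗ ((X - 1) * C (1 / 2) * q) + chebTransformₗ q) := by
  have htwo : 2 * C (1 / 2 : ℚ) = 1 := by rw [← C_ofNat, ← C_mul]; norm_num
  have hsq : ((X - 1) * C (1 / 2)) ^ 2 * q =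
      C (1 / 2) * (C (1 / 2) * (X ^ 2 * q - X * q - X * q + q)) := by ring
  have hmul : (X - 1) * C (1 / 2) * q = C (1 / 2) * (X * q - q) := by ring
  rw [hsq, hmul]
  simp only [chebTransformₗ_C_mul, map_add, map_sub, chebTransformₗ_X_sq_mul]
  linear_combination (C (1 / 2) * (X - 1) * chebTransformₗ q) * htwo

end Chebyshev

section Finsets

theorem sum_Icc_card_filter_eq_mul_pow {ι R : Type*} [Semiring R] (s : Finset ι) {f : ι → ℕ}
    {N : ℕ} (hf : ∀ i ∈ s, f i ≤ N) (t : R) :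
    ∑ k ∈ Icc 1 N, (#{i ∈ s | f i = k} : R) * t ^ k = ∑ i ∈ s with f i ≠ 0, t ^ f i := by
  have hmaps : ∀ i ∈ s.filter (f · ≠ 0), f i ∈ Icc 1 N := by grind
  rw [← sum_fiberwise_of_maps_to hmaps]
  refine sum_congr rfl fun k hk => ?_
  have hfilter : {i ∈ s.filter (f · ≠ 0) | f i = k} = {i ∈ s | f i = k} := by grind
  rw [hfilter, sum_congr rfl fun i hi => by rw [(mem_filter.1 hi).2], sum_const, nsmul_eq_mul]

theorem finset_induction_on_two_min {α : Type*} [LinearOrder α] [DecidableEq α]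
    {P : Finset α → Prop} (empty : P ∅) (singleton : ∀ a, P {a})
    (insert_insert : ∀ a b F, a < b → (∀ x ∈ F, b < x) →
      P F → P (insert a F) → P (insert b F) → P (insert a (insert b F)))
    (F : Finset α) : P F := by
  induction F using Finset.strongInduction with
  | H F ih =>
  have exists_eq_insert_min (G : Finset α) (hG : G.Nonempty) :
      ∃ a, ∃ H, (∀ x ∈ H, a < x) ∧ G = insert a H :=
    ⟨G.min' hG, G.erase (G.min' hG),
      fun x hx => G.min'_lt_of_mem_erase_min' hG (by convert hx),
      (insert_erase (G.min'_mem hG)).symm⟩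
  obtain rfl | hF := F.eq_empty_or_nonempty
  · exact empty
  obtain ⟨a, F', ha, rfl⟩ := exists_eq_insert_min F hF
  obtain rfl | hF' := F'.eq_empty_or_nonempty
  · exact singleton a
  obtain ⟨b, G, hb, rfl⟩ := exists_eq_insert_min F' hF'
  have hab : a < b := ha b (mem_insert_self b G)
  have hbG : b ∉ G := fun h => (hb b h).false
  have haG : a ∉ insert b G := fun h => (ha a h).false
  have hbaG : b ∉ insert a G := by simp [hab.ne', hbG]
  exact insert_insert a b G hab hb
    (ih G ((ssubset_insert hbG).trans (ssubset_insert haG)))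
    (ih (insert a G) (insert_comm a b G ▸ ssubset_insert hbaG))
    (ih (insert b G) (ssubset_insert haG))

theorem eq_insert_or_eq_insert_or_eq {α : Type*} [DecidableEq α] {F G : Finset α} {a b : α}
    (ha : a ∉ F) (hb : b ∉ F) (h : insert a (insert b G) = insert a (insert b F))
    (hG : a ∉ G ∨ b ∉ G) : G = insert a F ∨ G = insert b F ∨ G = F := by
  have hiff : ∀ x, x ≠ a → x ≠ b → (x ∈ G ↔ x ∈ F) := fun x hxa hxb => by
    simpa [hxa, hxb] using Finset.ext_iff.1 h x
  have ext_of_iff {H : Finset α} (hH : ∀ x, x ≠ a → x ≠ b → (x ∈ H ↔ x ∈ F))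
      (hHa : a ∈ G ↔ a ∈ H) (hHb : b ∈ G ↔ b ∈ H) : G = H := by
    ext x
    by_cases hxa : x = a
    · rwa [hxa]
    by_cases hxb : x = b
    · rwa [hxb]
    rw [hiff x hxa hxb, hH x hxa hxb]
  by_cases haG : a ∈ G
  · exact Or.inl (ext_of_iff (by grind) (by grind) (by grind))
  by_cases hbG : b ∈ G
  · exact Or.inr (Or.inl (ext_of_iff (by grind) (by grind) (by grind)))
  · exact Or.inr (Or.inr (ext_of_iff (by grind) (by grind) (by grind)))

theorem sum_image_insert_pow_card {β R : Type*} [DecidableEq β] [CommSemiring R] {b : β}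
    {S : Finset (Finset β)} (hS : ∀ s ∈ S, b ∉ s) (t : R) :
    ∑ s ∈ S.image (insert b), t ^ #s = t * ∑ s ∈ S, t ^ #s := by
  have hinj : Set.InjOn (insert b) (S : Set (Finset β)) := fun s hs s' hs' h => by
    rw [← erase_insert (hS s hs), h, erase_insert (hS s' hs')]
  rw [sum_image hinj, mul_sum]
  exact sum_congr rfl fun s hs => by rw [card_insert_of_notMem (hS s hs), pow_succ']

end Finsets

section VertexSet

variable {α : Type*} [DecidableEq α]

/-- The set `{u_1, v_1, …, u_k, v_k} ∖ {1̂}` of vertices of the original complex involved in a set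
of pairs `(u_i, v_i)`. -/
def vertexSet (σ : Finset (α × WithTop α)) : Finset α :=
  σ.biUnion pairVertexSet

theorem mem_pairVertexSet {p : α × WithTop α} {x : α} :
    x ∈ pairVertexSet p ↔ x = p.1 ∨ (x : WithTop α) = p.2 := by
  obtain ⟨u, v⟩ := p
  cases v <;> simp [pairVertexSet]

theorem mem_vertexSet {σ : Finset (α × WithTop α)} {x : α} :
    x ∈ vertexSet σ ↔ ∃ p ∈ σ, x = p.1 ∨ (x : WithTop α) = p.2 := by
  simp only [vertexSet, mem_biUnion, mem_pairVertexSet]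

theorem fst_mem_vertexSet {σ : Finset (α × WithTop α)} {p : α × WithTop α} (hp : p ∈ σ) :
    p.1 ∈ vertexSet σ :=
  mem_vertexSet.2 ⟨p, hp, Or.inl rfl⟩

theorem mem_vertexSet_of_snd_eq {σ : Finset (α × WithTop α)} {p : α × WithTop α} (hp : p ∈ σ)
    {x : α} (hx : p.2 = x) : x ∈ vertexSet σ :=
  mem_vertexSet.2 ⟨p, hp, Or.inr hx.symm⟩

theorem vertexSet_insert_coe (a b : α) (τ : Finset (α × WithTop α)) :
    vertexSet (insert (a, (b : WithTop α)) τ) = insert a (insert b (vertexSet τ)) := by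
  ext x
  simp [mem_vertexSet, or_assoc]

theorem vertexSet_singleton_top (a : α) : vertexSet {(a, (⊤ : WithTop α))} = {a} := by
  ext x
  simp [mem_vertexSet]

theorem vertexSet_eq_empty_iff {σ : Finset (α × WithTop α)} : vertexSet σ = ∅ ↔ σ = ∅ := by
  refine ⟨fun h => eq_empty_of_forall_notMem fun p hp => ?_, fun h => by rw [h]; rfl⟩
  simpa [h] using fst_mem_vertexSet hp

theorem nonempty_of_vertexSet_nonempty {σ : Finset (α × WithTop α)} (h : (vertexSet σ).Nonempty) :
    σ.Nonempty :=
  nonempty_iff_ne_empty.2 fun hσ => h.ne_empty (vertexSet_eq_empty_iff.2 hσ)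

end VertexSet

section TchebChains

variable {α : Type*} [LinearOrder α]

/-- The strict order on pairs `(u, v)` whose finite chains are the faces of the Tchebyshev
triangulation. It extends the condition on consecutive pairs in `tchebFaces` to all pairs. -/
def TchebLT (p q : α × WithTop α) : Prop :=
  p.2 < q.2 ∧ (p.1 = q.1 ∨ p.2 ≤ (q.1 : WithTop α))

instance : IsTrans (α × WithTop α) TchebLT where
  trans p q r hpq hqr := by
    refine ⟨hpq.1.trans hqr.1, ?_⟩
    obtain hfst | hle := hqr.2
    · exact hfst ▸ hpq.2
    · exact Or.inr (hpq.1.le.trans hle)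

theorem tchebLT_of_lt_of_succ {k : ℕ} {e : Fin k → α × WithTop α}
    (h : ∀ i j : Fin k, (i : ℕ) + 1 = j → TchebLT (e i) (e j)) {i j : Fin k} (hij : i < j) :
    TchebLT (e i) (e j) := by
  cases k with
  | zero => exact i.elim0
  | succ k => exact (Fin.liftFun_iff_succ TchebLT).2 (fun i => h _ _ (by simp)) hij

theorem eq_fst_or_snd_le_of_mem_vertexSet [DecidableEq α] {σ : Finset (α × WithTop α)}
    {p : α × WithTop α} (hleast : ∀ q ∈ σ, q = p ∨ TchebLT p q) {x : α} (hx : x ∈ vertexSet σ) :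
    x = p.1 ∨ p.2 ≤ x := by
  obtain ⟨q, hq, hxq⟩ := mem_vertexSet.1 hx
  obtain rfl | ⟨hsnd, hfst⟩ := hleast q hq
  · exact hxq.imp_right ge_of_eq
  · obtain rfl | hx_snd := hxq
    · exact hfst.imp_left Eq.symm
    · exact Or.inr (hx_snd ▸ hsnd.le)

/-- The condition for a set of pairs `(u, v)` to be a face of a Tchebyshev triangulation, with no
requirement on the vertices involved. -/
structure IsTchebChain (σ : Finset (α × WithTop α)) : Prop where
  isChain : IsChain TchebLT (σ : Set (α × WithTop α))
  fst_lt_snd : ∀ p ∈ σ, (p.1 : WithTop α) < p.2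

namespace IsTchebChain

variable {σ τ : Finset (α × WithTop α)} {F : Finset α} {a b : α}

theorem mono (hσ : IsTchebChain σ) (h : τ ⊆ σ) : IsTchebChain τ :=
  ⟨hσ.isChain.mono (by exact_mod_cast h), fun p hp => hσ.fst_lt_snd p (h hp)⟩

theorem eq_of_snd_eq (hσ : IsTchebChain σ) {p q : α × WithTop α} (hp : p ∈ σ) (hq : q ∈ σ)
    (h : p.2 = q.2) : p = q := by
  by_contra hne
  obtain hlt | hlt := hσ.isChain hp hq hne
  · exact hlt.1.ne h
  · exact hlt.1.ne' h

theorem tchebLT_of_snd_lt (hσ : IsTchebChain σ) {p q : α × WithTop α} (hp : p ∈ σ) (hq : q ∈ σ)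
    (h : p.2 < q.2) : TchebLT p q :=
  (hσ.isChain hp hq (fun hpq => h.ne (congrArg Prod.snd hpq))).resolve_right
    fun hqp => h.not_gt hqp.1

theorem exists_forall_eq_or_tchebLT (hσ : IsTchebChain σ) (hne : σ.Nonempty) :
    ∃ p ∈ σ, ∀ q ∈ σ, q = p ∨ TchebLT p q := by
  obtain ⟨p, hp, hmin⟩ := σ.exists_min_image Prod.snd hne
  refine ⟨p, hp, fun q hq => ?_⟩
  obtain hlt | heq := (hmin q hq).lt_or_eq
  · exact Or.inr (hσ.tchebLT_of_snd_lt hp hq hlt)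
  · exact Or.inl (hσ.eq_of_snd_eq hq hp heq.symm)

theorem singleton_top (a : α) : IsTchebChain {(a, (⊤ : WithTop α))} where
  isChain := by simp
  fst_lt_snd := by simp

variable [DecidableEq α]

theorem eq_singleton_top (hσ : IsTchebChain σ) (hv : vertexSet σ = {a}) :
    σ = {(a, (⊤ : WithTop α))} := by
  have hne : σ.Nonempty := nonempty_of_vertexSet_nonempty (hv ▸ singleton_nonempty a)
  refine eq_singleton_iff_nonempty_unique_mem.2 ⟨hne, ?_⟩
  rintro ⟨u, v⟩ hp
  have hu : u = a := by simpa [hv] using fst_mem_vertexSet hp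
  have huv : (u : WithTop α) < v := hσ.fst_lt_snd _ hp
  cases v with
  | top => rw [hu]
  | coe y =>
    have hy : y = a := by simpa [hv] using mem_vertexSet_of_snd_eq hp (x := y) rfl
    simp [hu, hy] at huv

theorem coe_mem_and_forall (hσ : IsTchebChain σ) (hab : a < b) (hF : ∀ x ∈ F, b < x)
    (hv : vertexSet σ = insert a (insert b F)) :
    (a, (b : WithTop α)) ∈ σ ∧ ∀ q ∈ σ, q = (a, ↑b) ∨ TchebLT (a, ↑b) q := by
  have hne : σ.Nonempty := nonempty_of_vertexSet_nonempty (hv ▸ insert_nonempty _ _)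
  obtain ⟨⟨u, v⟩, hp, hleast⟩ := hσ.exists_forall_eq_or_tchebLT hne
  have huv : (u : WithTop α) < v := hσ.fst_lt_snd _ hp
  have hle := fun x => eq_fst_or_snd_le_of_mem_vertexSet hleast (x := x)
  have hmin : ∀ x ∈ vertexSet σ, x = a ∨ b ≤ x := by grind
  have hu : u = a := by
    obtain hau | hva := hle a (by simp [hv])
    · exact hau.symm
    · have hua : u < a := WithTop.coe_lt_coe.1 (huv.trans_le hva)
      have := hmin u (fst_mem_vertexSet hp)
      grind
  subst hu
  have hvb : v ≤ b := (hle b (by simp [hv])).resolve_left hab.ne'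
  lift v to α using ne_top_of_le_ne_top WithTop.coe_ne_top hvb
  rw [WithTop.coe_le_coe] at hvb
  rw [WithTop.coe_lt_coe] at huv
  have hbv : b ≤ v := (hmin v (mem_vertexSet_of_snd_eq hp rfl)).resolve_left huv.ne'
  obtain rfl := hvb.antisymm hbv
  exact ⟨hp, hleast⟩

/-- Pairs above `(a, b)` can involve `a` or `b` only as their first entries, and a pair starting
in `a` is not comparable to one starting in `b`. -/
theorem notMem_vertexSet_or_notMem_vertexSet (hτ : IsTchebChain τ) (hab : a < b)
    (hlt : ∀ q ∈ τ, TchebLT (a, (b : WithTop α)) q) : a ∉ vertexSet τ ∨ b ∉ vertexSet τ := by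
  by_contra! ⟨ha, hb⟩
  obtain ⟨⟨u, v⟩, hq, hau⟩ := mem_vertexSet.1 ha
  obtain ⟨⟨u', v'⟩, hr, hbu'⟩ := mem_vertexSet.1 hb
  have hbv : (b : WithTop α) < v := (hlt _ hq).1
  have hbv' : (b : WithTop α) < v' := (hlt _ hr).1
  have hab' : (a : WithTop α) < b := WithTop.coe_lt_coe.2 hab
  obtain rfl : a = u := hau.resolve_right (hab'.trans hbv).ne
  obtain rfl : b = u' := hbu'.resolve_right hbv'.ne
  obtain hqr | hrq := hτ.isChain hq hr (by simp [hab.ne])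
  · exact hqr.2.elim hab.ne hbv.not_ge
  · exact hrq.2.elim hab.ne' (hab'.trans hbv').not_ge

theorem insert_coe (hτ : IsTchebChain τ) (hab : a < b) (hle : ∀ x ∈ vertexSet τ, x = a ∨ b ≤ x)
    (hnot : a ∉ vertexSet τ ∨ b ∉ vertexSet τ) : IsTchebChain (insert (a, (b : WithTop α)) τ) := by
  have hlt : ∀ q ∈ τ, TchebLT (a, (b : WithTop α)) q := by
    rintro ⟨u, v⟩ hq
    have huv : (u : WithTop α) < v := hτ.fst_lt_snd _ hq
    have hu := fst_mem_vertexSet hq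
    obtain rfl | hbu := hle u hu
    · refine ⟨?_, Or.inl rfl⟩
      cases v with
      | top => exact WithTop.coe_lt_top b
      | coe y =>
        have hy : y ∈ vertexSet τ := mem_vertexSet_of_snd_eq hq rfl
        simp only [WithTop.coe_lt_coe] at huv ⊢
        grind
    · exact ⟨(WithTop.coe_le_coe.2 hbu).trans_lt huv, Or.inr (WithTop.coe_le_coe.2 hbu)⟩
  constructor
  · rw [coe_insert]
    exact hτ.isChain.insert fun q hq _ => Or.inl (hlt q hq)
  · simpa [hab] using hτ.fst_lt_snd

theorem card_le_card_vertexSet (hσ : IsTchebChain σ) : #σ ≤ #(vertexSet σ) := by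
  obtain rfl | hne := σ.eq_empty_or_nonempty
  · simp
  obtain ⟨p, hp, hleast⟩ := hσ.exists_forall_eq_or_tchebLT hne
  have hp_mem := fst_mem_vertexSet hp
  have hmaps : ∀ q ∈ σ, q.2 ∈ WithTop.insertTop ((vertexSet σ).erase p.1) := by
    rintro ⟨u, v⟩ hq
    cases v with
    | top => exact WithTop.top_mem_insertTop
    | coe y =>
      have hpy : (p.1 : WithTop α) < y := (hσ.fst_lt_snd p hp).trans_le <| by
        obtain h | h := hleast _ hq
        · exact h ▸ le_rfl
        · exact h.1.le
      rw [WithTop.coe_lt_coe] at hpy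
      exact WithTop.some_mem_insertTop.2 (mem_erase.2 ⟨hpy.ne', mem_vertexSet_of_snd_eq hq rfl⟩)
  calc #σ ≤ #(WithTop.insertTop ((vertexSet σ).erase p.1)) :=
        card_le_card_of_injOn Prod.snd hmaps fun _ hq _ hr => hσ.eq_of_snd_eq hq hr
    _ = #((vertexSet σ).erase p.1) + 1 := by
      simp only [WithTop.insertTop, OrderEmbedding.coe_ofMapLEIff, card_cons, card_map]
    _ = #(vertexSet σ) := card_erase_add_one hp_mem

theorem image_univ {k : ℕ} {e : Fin k → α × WithTop α}
    (hlt : ∀ i j, i < j → TchebLT (e i) (e j)) (hfst : ∀ i, ((e i).1 : WithTop α) < (e i).2) :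
    IsTchebChain (univ.image e) := by
  constructor
  · rw [coe_image, coe_univ, Set.image_univ]
    rintro _ ⟨i, rfl⟩ _ ⟨j, rfl⟩ hne
    obtain hij | hji := lt_or_gt_of_ne (ne_of_apply_ne e hne)
    · exact Or.inl (hlt i j hij)
    · exact Or.inr (hlt j i hji)
  · simpa using hfst

theorem exists_image_univ_eq (hσ : IsTchebChain σ) :
    ∃ e : Fin #σ → α × WithTop α, univ.image e = σ ∧ StrictMono fun i => (e i).2 := by
  have hinj : Set.InjOn Prod.snd (σ : Set (α × WithTop α)) := fun _ hp _ hq =>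
    hσ.eq_of_snd_eq hp hq
  have hcard : #(σ.image Prod.snd) = #σ := card_image_of_injOn hinj
  set f := (σ.image Prod.snd).orderEmbOfFin hcard
  have hf : ∀ i, ∃ p ∈ σ, p.2 = f i := fun i => mem_image.1 (orderEmbOfFin_mem _ hcard i)
  choose e he_mem he_snd using hf
  have hmono : StrictMono fun i => (e i).2 := by simpa only [he_snd] using f.strictMono
  refine ⟨e, eq_of_subset_of_card_le (image_subset_iff.2 fun i _ => he_mem i) ?_, hmono⟩
  have he_inj : Function.Injective e := Function.Injective.of_comp (f := Prod.snd) hmono.injective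
  rw [card_image_of_injective _ he_inj, card_fin]

end IsTchebChain

end TchebChains

section FacesOn

variable {α : Type*} [LinearOrder α] [DecidableEq α] {F : Finset α} {σ : Finset (α × WithTop α)}
  {a b : α}

open Classical in
/-- The faces of a Tchebyshev triangulation that involve exactly the vertices in `F`. -/
noncomputable def facesOn (F : Finset α) : Finset (Finset (α × WithTop α)) :=
  {σ ∈ (F ×ˢ WithTop.insertTop F).powerset | IsTchebChain σ ∧ vertexSet σ = F}

theorem mem_facesOn : σ ∈ facesOn F ↔ IsTchebChain σ ∧ vertexSet σ = F := by
  simp only [facesOn, mem_filter, mem_powerset, and_iff_right_iff_imp]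
  rintro ⟨-, rfl⟩ ⟨u, v⟩ hp
  refine mem_product.2 ⟨fst_mem_vertexSet hp, ?_⟩
  cases v with
  | top => exact WithTop.top_mem_insertTop
  | coe y => exact WithTop.some_mem_insertTop.2 (mem_vertexSet_of_snd_eq hp rfl)

theorem disjoint_facesOn {G : Finset α} (h : F ≠ G) : Disjoint (facesOn F) (facesOn G) := by
  refine disjoint_left.2 fun σ hF hG => h ?_
  rw [← (mem_facesOn.1 hF).2, (mem_facesOn.1 hG).2]

theorem card_le_of_mem_facesOn (hσ : σ ∈ facesOn F) : #σ ≤ #F := by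
  obtain ⟨hchain, rfl⟩ := mem_facesOn.1 hσ
  exact hchain.card_le_card_vertexSet

theorem card_eq_zero_iff_of_mem_facesOn (hσ : σ ∈ facesOn F) : #σ = 0 ↔ #F = 0 := by
  rw [← (mem_facesOn.1 hσ).2, card_eq_zero, card_eq_zero, vertexSet_eq_empty_iff]

theorem facesOn_empty : facesOn (∅ : Finset α) = {∅} := by
  ext σ
  rw [mem_facesOn, vertexSet_eq_empty_iff, mem_singleton, and_iff_right_iff_imp]
  rintro rfl
  exact ⟨by simp, by simp⟩

theorem facesOn_singleton (a : α) : facesOn {a} = {{(a, (⊤ : WithTop α))}} := by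
  ext σ
  rw [mem_facesOn, mem_singleton]
  refine ⟨fun ⟨hσ, hv⟩ => hσ.eq_singleton_top hv, ?_⟩
  rintro rfl
  exact ⟨.singleton_top a, vertexSet_singleton_top a⟩

theorem coe_notMem_of_mem_facesOn (hσ : σ ∈ facesOn F) (h : a ∉ F ∨ b ∉ F) :
    (a, (b : WithTop α)) ∉ σ := by
  rw [← (mem_facesOn.1 hσ).2] at h
  intro hmem
  exact h.elim (· (fst_mem_vertexSet hmem)) (· (mem_vertexSet_of_snd_eq hmem rfl))

theorem facesOn_insert_insert (hab : a < b) (hF : ∀ x ∈ F, b < x) :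
    facesOn (insert a (insert b F)) =
      (facesOn (insert a F) ∪ (facesOn (insert b F) ∪ facesOn F)).image
        (insert (a, (b : WithTop α))) := by
  have haF : a ∉ F := fun h => (hab.trans (hF a h)).false
  have hbF : b ∉ F := fun h => (hF b h).false
  ext σ
  simp only [mem_image, mem_union, mem_facesOn]
  constructor
  · rintro ⟨hσ, hv⟩
    obtain ⟨hmem, hleast⟩ := hσ.coe_mem_and_forall hab hF hv
    set τ := σ.erase (a, (b : WithTop α))
    have hinsert : insert (a, (b : WithTop α)) τ = σ := insert_erase hmem
    have hτ : IsTchebChain τ := hσ.mono (erase_subset _ _)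
    have hnot := hτ.notMem_vertexSet_or_notMem_vertexSet hab fun q hq =>
      (hleast q (mem_of_mem_erase hq)).resolve_left (ne_of_mem_erase hq)
    rw [← hinsert, vertexSet_insert_coe] at hv
    refine ⟨τ, ?_, hinsert⟩
    simp only [hτ, true_and]
    exact eq_insert_or_eq_insert_or_eq haF hbF hv hnot
  · rintro ⟨τ, hτ, rfl⟩
    rw [vertexSet_insert_coe]
    obtain ⟨hτ, hv⟩ | ⟨hτ, hv⟩ | ⟨hτ, hv⟩ := hτ <;>
      exact ⟨hτ.insert_coe hab (by grind) (by grind), by grind⟩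

theorem sum_facesOn_insert_insert {R : Type*} [CommSemiring R] (hab : a < b)
    (hF : ∀ x ∈ F, b < x) (t : R) :
    ∑ σ ∈ facesOn (insert a (insert b F)), t ^ #σ =
      t * (∑ σ ∈ facesOn (insert a F), t ^ #σ +
        (∑ σ ∈ facesOn (insert b F), t ^ #σ + ∑ σ ∈ facesOn F, t ^ #σ)) := by
  have haF : a ∉ F := fun h => (hab.trans (hF a h)).false
  have hbF : b ∉ F := fun h => (hF b h).false
  have habF : a ∉ insert b F := by simp [hab.ne, haF]
  have hnotMem : ∀ σ ∈ facesOn (insert a F) ∪ (facesOn (insert b F) ∪ facesOn F),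
      (a, (b : WithTop α)) ∉ σ := by
    simp only [mem_union]
    rintro σ (hσ | hσ | hσ) <;> exact coe_notMem_of_mem_facesOn hσ (by grind)
  rw [facesOn_insert_insert hab hF, sum_image_insert_pow_card hnotMem, sum_union, sum_union]
  · exact disjoint_facesOn (by grind)
  · exact disjoint_union_right.2
      ⟨disjoint_facesOn fun h => habF (h ▸ mem_insert_self a F), disjoint_facesOn (by grind)⟩

theorem chebTransformₗ_half_X_sub_one_pow_card (F : Finset α) :
    chebTransformₗ (((X - 1) * C (1 / 2)) ^ #F) =
      ∑ σ ∈ facesOn F, ((X - 1) * C (1 / 2)) ^ #σ := by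
  induction F using finset_induction_on_two_min with
  | empty => simp [facesOn_empty, chebTransformₗ_one]
  | singleton a => simpa [facesOn_singleton] using chebTransformₗ_half_X_sub_one
  | insert_insert a b F hab hF ih iha ihb =>
    have haF : a ∉ F := fun h => (hab.trans (hF a h)).false
    have hbF : b ∉ F := fun h => (hF b h).false
    have habF : a ∉ insert b F := by simp [hab.ne, haF]
    rw [sum_facesOn_insert_insert hab hF, ← ih, ← iha, ← ihb, card_insert_of_notMem habF,
      card_insert_of_notMem hbF, card_insert_of_notMem haF]
    calc chebTransformₗ (((X - 1) * C (1 / 2)) ^ (#F + 1 + 1))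
      _ = chebTransformₗ (((X - 1) * C (1 / 2)) ^ 2 * ((X - 1) * C (1 / 2)) ^ #F) := by
        ring_nf
      _ = _ := by
        rw [chebTransformₗ_half_X_sub_one_sq_mul, ← pow_succ']
        ring

end FacesOn

section TchebFaces

variable {α : Type*} [LinearOrder α] [DecidableEq α]

theorem tchebFaces_eq (A : Finset (Finset α)) (k : ℕ) :
    tchebFaces A k = ({σ ∈ A.biUnion facesOn | #σ = k} : Finset (Finset (α × WithTop α))) := by
  ext σ
  simp only [coe_filter, mem_biUnion, mem_facesOn, Set.mem_ofPred_eq]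
  constructor
  · rintro ⟨e, rfl, hmono, hfst, hA, hsucc⟩
    have hlt : ∀ i j, i < j → TchebLT (e i) (e j) := fun i j =>
      tchebLT_of_lt_of_succ fun i j hij => ⟨hmono (Fin.lt_def.2 (by lia)), hsucc i j hij⟩
    have he_inj : Function.Injective e := Function.Injective.of_comp (f := Prod.snd) hmono.injective
    refine ⟨⟨_, hA, .image_univ hlt hfst, image_biUnion⟩, ?_⟩
    rw [card_image_of_injective _ he_inj, card_fin]
  · rintro ⟨⟨F, hF, hσ, rfl⟩, rfl⟩
    obtain ⟨e, he, hmono⟩ := hσ.exists_image_univ_eq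
    have hmem : ∀ i, e i ∈ σ := fun i => he ▸ mem_image_of_mem e (mem_univ i)
    refine ⟨e, he.symm, hmono, fun i => hσ.fst_lt_snd _ (hmem i), ?_, fun i j hij => ?_⟩
    · rwa [← image_biUnion, he]
    · exact (hσ.tchebLT_of_snd_lt (hmem i) (hmem j) (hmono (Fin.lt_def.2 (by lia)))).2

theorem sum_tchebFaces_mul_pow {R : Type*} [Semiring R] (A : Finset (Finset α)) {N : ℕ}
    (hN : ∀ F ∈ A, #F ≤ N) (t : R) :
    ∑ k ∈ Icc 1 N, ((tchebFaces A k).ncard : R) * t ^ k =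
      ∑ F ∈ A with #F ≠ 0, ∑ σ ∈ facesOn F, t ^ #σ := by
  have hcard : ∀ σ ∈ A.biUnion facesOn, #σ ≤ N := fun σ hσ => by
    obtain ⟨F, hF, hσF⟩ := mem_biUnion.1 hσ
    exact (card_le_of_mem_facesOn hσF).trans (hN F hF)
  have hfilter : {σ ∈ A.biUnion facesOn | #σ ≠ 0} = {F ∈ A | #F ≠ 0}.biUnion facesOn := by
    ext σ
    simp only [mem_filter, mem_biUnion]
    grind [card_eq_zero_iff_of_mem_facesOn]
  simp only [tchebFaces_eq, Set.ncard_coe_finset]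
  rw [sum_Icc_card_filter_eq_mul_pow _ hcard, hfilter,
    sum_biUnion fun _ _ _ _ hne => disjoint_facesOn hne]

theorem chebTransform_F_polynomial_general (A : Finset (Finset α)) {N : ℕ}
    (hN : ∀ F ∈ A, #F ≤ N) :
    chebTransform (1 + ∑ j ∈ Icc 1 N, C (sCount A j : ℚ) * ((X - 1) * C (1 / 2 : ℚ)) ^ j) =
      1 + ∑ k ∈ Icc 1 N, C ((tchebFaces A k).ncard : ℚ) * ((X - 1) * C (1 / 2 : ℚ)) ^ k := by
  simp only [map_natCast, sCount]
  rw [← chebTransformₗ_apply, sum_Icc_card_filter_eq_mul_pow A hN, sum_tchebFaces_mul_pow A hN,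
    map_add, chebTransformₗ_one, map_sum]
  simp only [chebTransformₗ_half_X_sub_one_pow_card]

end TchebFaces

/-- **Hetyei's compatibility, generalized to cell complexes**: the Tchebyshev transform of
the F-polynomial of `A` is the F-polynomial of its Tchebyshev triangulation:
`T(F_A)(x) = F_{T(A)}(x)` in `ℚ[x]`, where `F_A(x) = 1 + ∑_{j≥1} s_j(A)·((x-1)/2)^j` and
`F_{T(A)}(x) = 1 + ∑_{k≥1} f_{k-1}(T(A))·((x-1)/2)^k`. -/
theorem chebTransform_F_polynomial {α : Type*} [LinearOrder α] [Fintype α] [DecidableEq α]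
    (A : Finset (Finset α)) (hA : ∀ F ∈ A, F ≠ ∅) :
    chebTransform
        (1 + ∑ j ∈ Finset.Icc 1 (Fintype.card α),
          C ((sCount A j : ℚ)) * ((X - 1) * C (1 / 2 : ℚ)) ^ j)
      = 1 + ∑ k ∈ Finset.Icc 1 (Fintype.card α),
          C (((tchebFaces A k).ncard : ℚ)) * ((X - 1) * C (1 / 2 : ℚ)) ^ k :=
  chebTransform_F_polynomial_general A fun F _ => F.card_le_univ
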